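/- Let v₁, v₂, v₃ ∈ ℝ² be affinely independent with barycentric coordinates λᵢ (λᵢ(vⱼ) = δᵢⱼ), let γⱼ(t) = ((1+t)/2) v_{j+1} + ((1-t)/2) v_{j+2} (indices modulo 3), and fix μ ≥ 1, σ > 0. Then for all i, j ∈ {1,2,3}: ∫_{-1}^{1} q_{σ,μ}(t) λᵢ(γⱼ(t))² g̃_{σ,μ}(t) dt = (‖q_{σ,μ}‖²_{2,σ,μ}/4)(1 - δᵢⱼ), where ‖q_{σ,μ}‖²_{2,σ,μ} = ∫_{-1}^{1} q_{σ,μ}(t)² g̃_{σ,μ}(t) dt. -/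

import Mathlib

open MeasureTheory

/-- Lower incomplete gamma function `γ(s,z) = ∫₀^z u^(s-1) e^(-u) du`. -/
noncomputable def lowGamma (s z : ℝ) : ℝ := ∫ u in (0:ℝ)..z, u ^ (s - 1) * Real.exp (-u)

/-- Modified lower incomplete gamma function `γ^mod(s,z) = γ(s,z)/z^s`. -/
noncomputable def gammaMod (s z : ℝ) : ℝ := lowGamma s z / z ^ s

/-- Second family of densities `g̃_{σ,μ}` on `[-1,1]`. -/
noncomputable def gTilde (σ μ t : ℝ) : ℝ :=
  ((2 * μ - 1) / gammaMod (1 / 2) (1 / (2 * σ ^ (4 * μ - 2)))) *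
    (t ^ 2) ^ (μ - 1) * Real.exp (-(1 / 2) * (t ^ 2 / σ ^ 2) ^ (2 * μ - 1))

/-- Second moment `s_{2,σ,μ}` of `g̃_{σ,μ}`. -/
noncomputable def sMom2 (σ μ : ℝ) : ℝ := ∫ t in (-1:ℝ)..1, t ^ 2 * gTilde σ μ t

/-- The orthogonal quadratic polynomial `q_{σ,μ}(t) = t² - s_{2,σ,μ}`. -/
noncomputable def qPoly (σ μ t : ℝ) : ℝ := t ^ 2 - sMom2 σ μ

/-- Parametrization of the edge `s_j` of the triangle, opposite to the vertex `v j`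
(indices taken cyclically in `Fin 3`). -/
noncomputable def edgeParam (v : Fin 3 → ℝ × ℝ) (j : Fin 3) (t : ℝ) : ℝ × ℝ :=
  ((1 + t) / 2) • v (j + 1) + ((1 - t) / 2) • v (j + 2)

/-!
The weight `g̃` is even and the substitution `u = t ^ (4 * μ - 2) / (2 * σ ^ (4 * μ - 2))` in the
incomplete gamma integral shows that it has total mass `1`, so that `q` is orthogonal to constants;
by parity `q` is orthogonal to `t` as well. On an edge an affine function has the form `c + d * t`,
where `2 * d` is the difference of its values at the endpoints. Of `(c + d * t) ^ 2` only
`d ^ 2 * t ^ 2` survives integration against `q * g̃`, and `t ^ 2` may be replaced by `q` there.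
For a barycentric coordinate, `2 * d` is `±1` on the two edges through its vertex and `0` on the
opposite edge.
-/

open intervalIntegral

section EvenOddIntegrals

variable {E : Type*} [NormedAddCommGroup E] [NormedSpace ℝ E] {f : ℝ → E} {a : ℝ}

lemma intervalIntegral_neg_self_of_odd (hf : f.Odd) : ∫ t in -a..a, f t = 0 := by
  have h := integral_comp_neg (a := -a) (b := a) f
  simp only [hf _, neg_neg, intervalIntegral.integral_neg] at h
  have := IsAddTorsionFree.of_isTorsionFree ℝ E
  exact self_eq_neg.mp h.symm

lemma intervalIntegral_neg_self_of_even (hf : f.Even) (hfi : IntervalIntegrable f volume 0 a) :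
    ∫ t in -a..a, f t = (2 : ℝ) • ∫ t in 0..a, f t := by
  have hreflect : ∫ t in -a..0, f t = ∫ t in 0..a, f t := by
    simpa only [hf _, neg_zero] using (integral_comp_neg (a := 0) (b := a) f).symm
  have hfi' : IntervalIntegrable f volume (-a) 0 := by
    simpa only [hf _, neg_zero] using ((IntervalIntegrable.iff_comp_neg).mp hfi).symm
  rw [← integral_add_adjacent_intervals hfi' hfi, hreflect, two_smul]

end EvenOddIntegrals

section EvenWeight

variable {w : ℝ → ℝ} {a s : ℝ}

theorem integral_sq_sub_mul_affine_sq_of_even (hw : IntervalIntegrable w volume (-a) a)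
    (hw_even : w.Even) (hs : ∫ t in -a..a, (t ^ 2 - s) * w t = 0) (c d : ℝ) :
    ∫ t in -a..a, (t ^ 2 - s) * (c + d * t) ^ 2 * w t
      = d ^ 2 * ∫ t in -a..a, (t ^ 2 - s) ^ 2 * w t := by
  have hPw {P : ℝ → ℝ} (hP : Continuous P) (r : ℝ) :
      IntervalIntegrable (fun t => r * (P t * w t)) volume (-a) a :=
    (hw.continuousOn_mul hP.continuousOn).const_mul r
  have hodd : ∫ t in -a..a, t * (t ^ 2 - s) * w t = 0 :=
    intervalIntegral_neg_self_of_odd fun t => by rw [hw_even]; ring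
  calc ∫ t in -a..a, (t ^ 2 - s) * (c + d * t) ^ 2 * w t
      = ∫ t in -a..a, (d ^ 2 * ((t ^ 2 - s) ^ 2 * w t)
          + (c ^ 2 + d ^ 2 * s) * ((t ^ 2 - s) * w t)
          + 2 * c * d * (t * (t ^ 2 - s) * w t)) := by
        congr with t
        ring
    _ = d ^ 2 * ∫ t in -a..a, (t ^ 2 - s) ^ 2 * w t := by
        rw [integral_add ((hPw (by fun_prop) _).add (hPw (by fun_prop) _))
            (hPw (by fun_prop) _),
          integral_add (hPw (by fun_prop) _) (hPw (by fun_prop) _)]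
        simp only [intervalIntegral.integral_const_mul, hs, hodd, mul_zero, add_zero]

end EvenWeight

section IncompleteGamma

variable {s z p : ℝ}

lemma intervalIntegral_comp_rpow {E : Type*} [NormedAddCommGroup E] [NormedSpace ℝ E] (f : ℝ → E)
    {a : ℝ} (hp : 0 < p) (ha : 0 ≤ a) :
    ∫ t in 0..a, (p * t ^ (p - 1)) • f (t ^ p) = ∫ u in 0..a ^ p, f u := by
  have h := integral_comp_rpow_Ioi_of_pos (g := (Set.Iic (a ^ p)).indicator f) hp
  have hind : Set.EqOn (fun t => (p * t ^ (p - 1)) • (Set.Iic (a ^ p)).indicator f (t ^ p))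
      ((Set.Iic a).indicator fun t => (p * t ^ (p - 1)) • f (t ^ p)) (Set.Ioi 0) := by
    intro t (ht : 0 < t)
    simp only [Set.indicator_apply, Set.mem_Iic, Real.rpow_le_rpow_iff ht.le ha hp, smul_ite,
      smul_zero]
  rw [setIntegral_congr_fun measurableSet_Ioi hind, setIntegral_indicator measurableSet_Iic,
    setIntegral_indicator measurableSet_Iic, Set.Ioi_inter_Iic, Set.Ioi_inter_Iic] at h
  rw [integral_of_le ha, integral_of_le (by positivity), h]

lemma gammaMod_eq_integral (hz : 0 < z) :
    gammaMod s z = ∫ w in (0 : ℝ)..1, w ^ (s - 1) * Real.exp (-(z * w)) := by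
  have hscale : lowGamma s z = z * ∫ w in (0 : ℝ)..1, (z * w) ^ (s - 1) * Real.exp (-(z * w)) := by
    rw [mul_integral_comp_mul_left z (f := fun u => u ^ (s - 1) * Real.exp (-u)), mul_zero,
      mul_one, lowGamma]
  rw [gammaMod, div_eq_iff (by positivity), hscale, ← intervalIntegral.integral_const_mul,
    ← intervalIntegral.integral_mul_const]
  refine integral_congr fun w hw => ?_
  rw [Set.uIcc_of_le zero_le_one] at hw
  simp only [Real.mul_rpow hz.le hw.1, Real.rpow_sub_one hz.ne']
  field_simp

lemma gammaMod_eq_integral_rpow (hz : 0 < z) (hp : 0 < p) :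
    gammaMod s z = p * ∫ t in (0 : ℝ)..1, t ^ (p * s - 1) * Real.exp (-(z * t ^ p)) := by
  have h := intervalIntegral_comp_rpow (fun w => w ^ (s - 1) * Real.exp (-(z * w))) hp zero_le_one
  rw [Real.one_rpow] at h
  rw [gammaMod_eq_integral hz, ← h, ← intervalIntegral.integral_const_mul]
  refine integral_congr_Ioo_of_le zero_le_one fun t ht => ?_
  have hpow : t ^ (p - 1) * (t ^ p) ^ (s - 1) = t ^ (p * s - 1) := by
    rw [← Real.rpow_mul ht.1.le, ← Real.rpow_add ht.1]
    ring_nf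
  rw [smul_eq_mul, ← hpow]
  ring

lemma gammaMod_pos (hs : 0 < s) (hz : 0 < z) : 0 < gammaMod s z := by
  rw [gammaMod_eq_integral hz]
  refine intervalIntegral_pos_of_pos_on ?_ (fun w hw => ?_) one_pos
  · exact (intervalIntegrable_rpow' (by linarith)).mul_continuousOn (by fun_prop)
  · exact mul_pos (Real.rpow_pos_of_pos hw.1 _) (Real.exp_pos _)

end IncompleteGamma

section Weight

variable {σ μ : ℝ}

lemma gTilde_even (σ μ : ℝ) : (gTilde σ μ).Even := fun t => by
  simp only [gTilde, neg_sq]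

lemma gTilde_of_pos (hσ : 0 < σ) {t : ℝ} (ht : 0 < t) :
    gTilde σ μ t = (2 * μ - 1) / gammaMod (1 / 2) (1 / (2 * σ ^ (4 * μ - 2))) *
      (t ^ (2 * μ - 2) * Real.exp (-(1 / (2 * σ ^ (4 * μ - 2)) * t ^ (4 * μ - 2)))) := by
  have sq_rpow {x : ℝ} (hx : 0 < x) (r : ℝ) : (x ^ 2) ^ r = x ^ (2 * r) := by
    rw [← Real.rpow_natCast_mul hx.le, Nat.cast_ofNat]
  have hexp : (t ^ 2 / σ ^ 2) ^ (2 * μ - 1) = t ^ (4 * μ - 2) / σ ^ (4 * μ - 2) := by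
    rw [Real.div_rpow (by positivity) (by positivity), sq_rpow ht, sq_rpow hσ]
    ring_nf
  rw [gTilde, hexp, sq_rpow ht, mul_assoc]
  ring_nf

lemma intervalIntegrable_gTilde (hσ : 0 < σ) (hμ : 1 / 2 < μ) (a b : ℝ) :
    IntervalIntegrable (gTilde σ μ) volume a b := by
  refine intervalIntegrable_of_even (fun t => (gTilde_even σ μ t).symm) (fun x hx => ?_)
  have hcont : Continuous fun t : ℝ =>
      Real.exp (-(1 / (2 * σ ^ (4 * μ - 2)) * t ^ (4 * μ - 2))) := by
    have := Real.continuous_rpow_const (q := 4 * μ - 2) (by linarith)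
    fun_prop
  refine (((intervalIntegrable_rpow' (r := 2 * μ - 2) (by linarith)).mul_continuousOn
    hcont.continuousOn).const_mul _).congr fun t ht => (gTilde_of_pos hσ ?_).symm
  rw [Set.uIoc_of_le hx.le] at ht
  exact ht.1

theorem integral_gTilde (hσ : 0 < σ) (hμ : 1 / 2 < μ) : ∫ t in (-1 : ℝ)..1, gTilde σ μ t = 1 := by
  have hz : 0 < 1 / (2 * σ ^ (4 * μ - 2)) := by positivity
  have hγ := gammaMod_pos (s := 1 / 2) (by norm_num) hz
  have hsubst := gammaMod_eq_integral_rpow (s := 1 / 2) (p := 4 * μ - 2) hz (by linarith)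
  rw [show (4 * μ - 2) * (1 / 2) - 1 = 2 * μ - 2 by ring] at hsubst
  rw [intervalIntegral_neg_self_of_even (gTilde_even σ μ) (intervalIntegrable_gTilde hσ hμ 0 1),
    integral_congr_Ioo_of_le zero_le_one fun t ht => gTilde_of_pos hσ ht.1,
    intervalIntegral.integral_const_mul, smul_eq_mul, div_mul_eq_mul_div, ← mul_div_assoc,
    div_eq_one_iff_eq hγ.ne', hsubst]
  ring

lemma integral_qPoly_mul_gTilde (hσ : 0 < σ) (hμ : 1 / 2 < μ) :
    ∫ t in (-1 : ℝ)..1, qPoly σ μ t * gTilde σ μ t = 0 := by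
  have hg := intervalIntegrable_gTilde hσ hμ (-1) 1
  simp only [qPoly, sub_mul]
  rw [integral_sub (hg.continuousOn_mul (by fun_prop)) (hg.const_mul _),
    intervalIntegral.integral_const_mul, integral_gTilde hσ hμ, mul_one, sMom2, sub_self]

end Weight

lemma sq_sub_kronecker_fin_three (i j : Fin 3) :
    ((if i = j + 1 then (1 : ℝ) else 0) - if i = j + 2 then 1 else 0) ^ 2
      = 1 - if i = j then 1 else 0 := by
  fin_cases i <;> fin_cases j <;> simp +decide

theorem integral_qPoly_bary_sq_edge_general {V : Type*} [AddCommGroup V] [Module ℝ V]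
    (f : V →ᵃ[ℝ] ℝ) (x y : V) {σ μ : ℝ} (hσ : 0 < σ) (hμ : 1 / 2 < μ) :
    ∫ t in (-1 : ℝ)..1,
        qPoly σ μ t * f (((1 + t) / 2) • x + ((1 - t) / 2) • y) ^ 2 * gTilde σ μ t
      = (∫ t in (-1 : ℝ)..1, qPoly σ μ t ^ 2 * gTilde σ μ t) / 4 * (f x - f y) ^ 2 := by
  have hf (t : ℝ) : f (((1 + t) / 2) • x + ((1 - t) / 2) • y)
      = (f x + f y) / 2 + (f x - f y) / 2 * t := by
    rw [Convex.combo_affine_apply (by ring), smul_eq_mul, smul_eq_mul]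
    ring
  simp only [hf]
  refine (integral_sq_sub_mul_affine_sq_of_even (intervalIntegrable_gTilde hσ hμ _ _)
    (gTilde_even σ μ) (integral_qPoly_mul_gTilde hσ hμ) _ _).trans ?_
  simp only [qPoly]
  ring

/-- `∫_{-1}^{1} q_{σ,μ}(t) λᵢ(γⱼ(t))² g̃_{σ,μ}(t) dt = (‖q_{σ,μ}‖²_{2,σ,μ}/4)(1 - δᵢⱼ)`. -/
theorem integral_qPoly_bary_sq_edge (v : Fin 3 → ℝ × ℝ) (hv : AffineIndependent ℝ v)
    (lam : Fin 3 → ℝ × ℝ → ℝ)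
    (hlam : ∀ i, ∃ A : (ℝ × ℝ) →ᵃ[ℝ] ℝ, ∀ x, lam i x = A x)
    (hkr : ∀ i j, lam i (v j) = if i = j then (1:ℝ) else 0)
    (σ μ : ℝ) (hσ : 0 < σ) (hμ : 1 ≤ μ)
    (i j : Fin 3) :
    ∫ t in (-1:ℝ)..1, qPoly σ μ t * (lam i (edgeParam v j t)) ^ 2 * gTilde σ μ t
      = ((∫ t in (-1:ℝ)..1, (qPoly σ μ t) ^ 2 * gTilde σ μ t) / 4)
          * (1 - if i = j then (1:ℝ) else 0) := by
  obtain ⟨A, hA⟩ := hlam i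
  simpa only [edgeParam, ← hA, hkr, sq_sub_kronecker_fin_three] using
    integral_qPoly_bary_sq_edge_general A (v (j + 1)) (v (j + 2)) hσ (by linarith)
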